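/- arXiv:1410.0645 — 2 statements merged into one kernel-verified Lean document; each statement's English description precedes it below -/
import Mathlib

section
/- Fix matrices X₁, X₂, X₃, X₄, Z₂, Z₃, Z₄ ∈ M₂(ℂ) and complex numbers a₁, a₂ ∈ ℂ (with Zᵢ representing the value of (a₁Xᵢ)_x at a point). Define, for q, r ∈ ℂ, ξ(q,r) = −a₂ X₃ q² − a₂ X₄ q² r + i Z₂ + i Z₄ q − i a₁ [X₁,X₂] − i a₁ [X₁,X₄] q − i a₁ [X₃,X₂] q − i a₁ [X₃,X₄] q² − 2 a₂ X₂ r q − 2 a₂ X₄ q² r and η(q,r) = −a₂ X₂ r² − a₂ X₄ r² q − i Z₃ − i Z₄ r + i a₁ [X₁,X₃] + i a₁ [X₁,X₄] r + i a₁ [X₂,X₃] r + i a₁ [X₂,X₄] r² − 2 a₂ X₃ r q − 2 a₂ X₄ r² q. Then the cross-derivative consistency condition ∂ξ/∂q (q,r) = ∂η/∂r (q,r) holds for all q, r ∈ ℂ if and only if Z₄ − a₁ [X₁,X₄] = 0, a₁ [X₃,X₄] = 0, and a₁ [X₂,X₄] = 0. -/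
open Complex

attribute [local instance] Matrix.normedAddCommGroup Matrix.normedSpace

/-- The matrix commutator `[A,B] = AB - BA`. -/
noncomputable def matComm (A B : Matrix (Fin 2) (Fin 2) ℂ) : Matrix (Fin 2) (Fin 2) ℂ :=
  A * B - B * A

theorem deriv_quad_aux (f : ℂ → Matrix (Fin 2) (Fin 2) ℂ) (A B C : Matrix (Fin 2) (Fin 2) ℂ)
    (h : ∀ z, f z = A + z • B + z ^ 2 • C) (z : ℂ) : deriv f z = B + (2 * z) • C := by
  have hf : f = fun z => A + z • B + z ^ 2 • C := funext h
  rw [hf]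
  apply HasDerivAt.deriv
  have h1 := (hasDerivAt_id z).smul_const B
  have h2 := ((hasDerivAt_id z).pow 2).smul_const C
  have h3 := ((hasDerivAt_const z A).add h1).add h2
  convert h3 using 1
  · rfl
  · simp

/-- Consistency condition `ξ_q = η_r` (for solvability of `K⁰_r = ξ`, `K⁰_q = η`)
in the extended Estabrook-Wahlquist analysis of the variable-coefficient DNLS:
it holds for all `q, r` iff `Z₄ − a₁ [X₁,X₄] = 0`, `a₁ [X₃,X₄] = 0` and
`a₁ [X₂,X₄] = 0`. -/
theorem vcDNLS_consistency (X₁ X₂ X₃ X₄ Z₂ Z₃ Z₄ : Matrix (Fin 2) (Fin 2) ℂ)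
    (a₁ a₂ : ℂ) :
    (∀ q r : ℂ,
      deriv (fun q' : ℂ =>
          (-(a₂ * q' ^ 2)) • X₃ - (a₂ * q' ^ 2 * r) • X₄ + I • Z₂ + (I * q') • Z₄
            - (I * a₁) • matComm X₁ X₂ - (I * a₁ * q') • matComm X₁ X₄
            - (I * a₁ * q') • matComm X₃ X₂ - (I * a₁ * q' ^ 2) • matComm X₃ X₄
            - (2 * a₂ * r * q') • X₂ - (2 * a₂ * q' ^ 2 * r) • X₄) q
        = deriv (fun r' : ℂ =>
          (-(a₂ * r' ^ 2)) • X₂ - (a₂ * r' ^ 2 * q) • X₄ - I • Z₃ - (I * r') • Z₄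
            + (I * a₁) • matComm X₁ X₃ + (I * a₁ * r') • matComm X₁ X₄
            + (I * a₁ * r') • matComm X₂ X₃ + (I * a₁ * r' ^ 2) • matComm X₂ X₄
            - (2 * a₂ * r' * q) • X₃ - (2 * a₂ * r' ^ 2 * q) • X₄) r)
    ↔ (Z₄ - a₁ • matComm X₁ X₄ = 0
        ∧ a₁ • matComm X₃ X₄ = 0 ∧ a₁ • matComm X₂ X₄ = 0) := by
  have h1 : ∀ q r : ℂ, _ := fun q r => deriv_quad_aux (fun q' : ℂ =>
          (-(a₂ * q' ^ 2)) • X₃ - (a₂ * q' ^ 2 * r) • X₄ + I • Z₂ + (I * q') • Z₄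
            - (I * a₁) • matComm X₁ X₂ - (I * a₁ * q') • matComm X₁ X₄
            - (I * a₁ * q') • matComm X₃ X₂ - (I * a₁ * q' ^ 2) • matComm X₃ X₄
            - (2 * a₂ * r * q') • X₂ - (2 * a₂ * q' ^ 2 * r) • X₄)
    (I • Z₂ - (I * a₁) • matComm X₁ X₂)
    (I • Z₄ - (I * a₁) • matComm X₁ X₄ - (I * a₁) • matComm X₃ X₂ - (2 * a₂ * r) • X₂)
    (-(a₂ • X₃) - (3 * a₂ * r) • X₄ - (I * a₁) • matComm X₃ X₄)
    (fun z => by module) q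
  have h2 : ∀ q r : ℂ, _ := fun q r => deriv_quad_aux (fun r' : ℂ =>
          (-(a₂ * r' ^ 2)) • X₂ - (a₂ * r' ^ 2 * q) • X₄ - I • Z₃ - (I * r') • Z₄
            + (I * a₁) • matComm X₁ X₃ + (I * a₁ * r') • matComm X₁ X₄
            + (I * a₁ * r') • matComm X₂ X₃ + (I * a₁ * r' ^ 2) • matComm X₂ X₄
            - (2 * a₂ * r' * q) • X₃ - (2 * a₂ * r' ^ 2 * q) • X₄)
    (-(I • Z₃) + (I * a₁) • matComm X₁ X₃)
    (-(I • Z₄) + (I * a₁) • matComm X₁ X₄ + (I * a₁) • matComm X₂ X₃ - (2 * a₂ * q) • X₃)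
    (-(a₂ • X₂) - (3 * a₂ * q) • X₄ + (I * a₁) • matComm X₂ X₄)
    (fun z => by module) r
  have h32 : matComm X₃ X₂ = - matComm X₂ X₃ := by simp [matComm]
  have e : ∀ q r : ℂ, ∀ D : Matrix (Fin 2) (Fin 2) ℂ, D = (2 * I) • ((Z₄ - a₁ • matComm X₁ X₄) - q • (a₁ • matComm X₃ X₄)
        - r • (a₁ • matComm X₂ X₄)) →
      (D = 0 ↔ (Z₄ - a₁ • matComm X₁ X₄) - q • (a₁ • matComm X₃ X₄)
        - r • (a₁ • matComm X₂ X₄) = 0) := by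
    intro q r D hD
    rw [hD, smul_eq_zero]
    simp
  have key : (∀ q r : ℂ, (Z₄ - a₁ • matComm X₁ X₄) - q • (a₁ • matComm X₃ X₄)
        - r • (a₁ • matComm X₂ X₄) = 0) ↔ (Z₄ - a₁ • matComm X₁ X₄ = 0
        ∧ a₁ • matComm X₃ X₄ = 0 ∧ a₁ • matComm X₂ X₄ = 0) := by
    constructor
    · intro h
      have h0 : Z₄ - a₁ • matComm X₁ X₄ = 0 := by simpa using h 0 0
      refine ⟨h0, ?_, ?_⟩
      · have := h 1 0
        rw [h0] at this
        simpa only [one_smul, zero_smul, sub_zero, zero_sub, neg_eq_zero] using this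
      · have := h 0 1
        rw [h0] at this
        simpa only [one_smul, zero_smul, sub_zero, zero_sub, neg_eq_zero] using this
    · rintro ⟨ha, hb, hc⟩ q r
      rw [ha, hb, hc]
      simp
  rw [← key]
  refine forall_congr' fun q => forall_congr' fun r => ?_
  rw [h1 q r, h2 q r, ← sub_eq_zero, h32]
  apply e
  module
end

section
/- Let a₁, a₂ : ℝ² → ℂ be smooth and let X₀, X₁, X₂, X₃ : ℝ² → M₂(ℂ) be smooth matrix-valued functions satisfying, at every point of ℝ²: (i) X₁_t − X₀_x + [X₁,X₀] = 0; (ii) X₃_t + i(a₁X₃)_xx − i(a₁[X₁,X₃])_x − i[X₁,(a₁X₃)_x] + i a₁[X₁,[X₁,X₃]] + [X₃,X₀] = 0; (iii) X₂_t − i(a₁X₂)_xx + i(a₁[X₁,X₂])_x + i[X₁,(a₁X₂)_x] − i a₁[X₁,[X₁,X₂]] + [X₂,X₀] = 0; (iv) −(a₁[X₂,X₃])_x + a₁[X₁,[X₂,X₃]] − [X₂,(a₁X₃)_x] + a₁[X₂,[X₁,X₃]] + [X₃,(a₁X₂)_x] − a₁[X₃,[X₁,X₂]] = 0; (v) −[X₃,(a₁X₃)_x]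 + a₁[X₃,[X₁,X₃]] = 0; (vi) [X₂,(a₁X₂)_x] − a₁[X₂,[X₁,X₂]] = 0; (vii) (a₂X₂)_x − a₂[X₁,X₂] + i a₁[X₂,[X₂,X₃]] = 0; (viii) (a₂X₃)_x − a₂[X₁,X₃] + i a₁[X₃,[X₂,X₃]] = 0. Then for every smooth solution q, r : ℝ² → ℂ of the vcDNLS system i q_t + a₁ q_xx + 2 i a₂ q r q_x + i a₂ q² r_x = 0, −i r_t + a₁ r_xx − 2 i a₂ q r r_x − i a₂ r² q_x = 0, the matrices F = X₁ + r X₂ + q X₃ and G = i a₁ (q_x X₃ − r_x X₂) + i(a₁X₂)_x r − i(a₁X₃)_x q − i a₁ r [X₁,X₂] + i a₁ q [X₁,X₃] + i a₁ r q [X₂,X₃] − a₂ r² q X₂ − a₂ q² r X₃ + X₀ satisfy the zero-curvature condition F_t − G_x + [F,G] = 0 identically on ℝ². -/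
open Complex

attribute [local instance] Matrix.normedAddCommGroup Matrix.normedSpace

/-- Partial derivative in the first (spatial) variable. -/
noncomputable def Dx {E : Type*} [NormedAddCommGroup E] [NormedSpace ℝ E]
    (F : ℝ × ℝ → E) : ℝ × ℝ → E := fun p => fderiv ℝ F p (1, 0)

/-- Partial derivative in the second (temporal) variable. -/
noncomputable def Dt {E : Type*} [NormedAddCommGroup E] [NormedSpace ℝ E]
    (F : ℝ × ℝ → E) : ℝ × ℝ → E := fun p => fderiv ℝ F p (0, 1)

section helpers

variable {E : Type*} [NormedAddCommGroup E] [NormedSpace ℝ E]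

theorem Dx_smooth {f : ℝ × ℝ → E} (hf : ContDiff ℝ (⊤ : ℕ∞) f) :
    ContDiff ℝ (⊤ : ℕ∞) (Dx f) := by
  unfold Dx
  exact (hf.fderiv_right (m := (⊤ : ℕ∞)) (by simp)).clm_apply contDiff_const

theorem smooth_diffAt {f : ℝ × ℝ → E} (hf : ContDiff ℝ (⊤ : ℕ∞) f) (p : ℝ × ℝ) :
    DifferentiableAt ℝ f p := hf.differentiable (by simp) p

theorem Dx_add' {f g : ℝ × ℝ → E} (hf : ContDiff ℝ (⊤ : ℕ∞) f) (hg : ContDiff ℝ (⊤ : ℕ∞) g)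
    (p : ℝ × ℝ) : Dx (fun p => f p + g p) p = Dx f p + Dx g p := by
  unfold Dx
  rw [fderiv_fun_add (smooth_diffAt hf p) (smooth_diffAt hg p)]; rfl

theorem Dt_add' {f g : ℝ × ℝ → E} (hf : ContDiff ℝ (⊤ : ℕ∞) f) (hg : ContDiff ℝ (⊤ : ℕ∞) g)
    (p : ℝ × ℝ) : Dt (fun p => f p + g p) p = Dt f p + Dt g p := by
  unfold Dt
  rw [fderiv_fun_add (smooth_diffAt hf p) (smooth_diffAt hg p)]; rfl

theorem Dx_sub' {f g : ℝ × ℝ → E} (hf : ContDiff ℝ (⊤ : ℕ∞) f) (hg : ContDiff ℝ (⊤ : ℕ∞) g)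
    (p : ℝ × ℝ) : Dx (fun p => f p - g p) p = Dx f p - Dx g p := by
  unfold Dx
  rw [fderiv_fun_sub (smooth_diffAt hf p) (smooth_diffAt hg p)]; rfl

variable [NormedSpace ℂ E] [IsScalarTower ℝ ℂ E]

theorem Dx_smul' {c : ℝ × ℝ → ℂ} {f : ℝ × ℝ → E} (hc : ContDiff ℝ (⊤ : ℕ∞) c)
    (hf : ContDiff ℝ (⊤ : ℕ∞) f) (p : ℝ × ℝ) :
    Dx (fun p => c p • f p) p = c p • Dx f p + Dx c p • f p := by
  unfold Dx
  rw [fderiv_fun_smul (smooth_diffAt hc p) (smooth_diffAt hf p)]; rfl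

theorem Dt_smul' {c : ℝ × ℝ → ℂ} {f : ℝ × ℝ → E} (hc : ContDiff ℝ (⊤ : ℕ∞) c)
    (hf : ContDiff ℝ (⊤ : ℕ∞) f) (p : ℝ × ℝ) :
    Dt (fun p => c p • f p) p = c p • Dt f p + Dt c p • f p := by
  unfold Dt
  rw [fderiv_fun_smul (smooth_diffAt hc p) (smooth_diffAt hf p)]; rfl

theorem sm {c : ℝ × ℝ → ℂ} {f : ℝ × ℝ → E} (hc : ContDiff ℝ (⊤ : ℕ∞) c)
    (hf : ContDiff ℝ (⊤ : ℕ∞) f) : ContDiff ℝ (⊤ : ℕ∞) (fun p => c p • f p) := hc.smul hf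

theorem Dx_csmul' (c : ℂ) {f : ℝ × ℝ → E} (hf : ContDiff ℝ (⊤ : ℕ∞) f) (p : ℝ × ℝ) :
    Dx (fun p => c • f p) p = c • Dx f p := by
  rw [Dx_smul' contDiff_const hf]
  simp [Dx]

end helpers

section comm

theorem Dx_mul' {f g : ℝ × ℝ → ℂ} (hf : ContDiff ℝ (⊤ : ℕ∞) f) (hg : ContDiff ℝ (⊤ : ℕ∞) g)
    (p : ℝ × ℝ) : Dx (fun p => f p * g p) p = f p * Dx g p + Dx f p * g p :=
  Dx_smul' hf hg p

theorem mc_add_left (A B C : Matrix (Fin 2) (Fin 2) ℂ) :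
    matComm (A + B) C = matComm A C + matComm B C := by unfold matComm; noncomm_ring

theorem mc_add_right (A B C : Matrix (Fin 2) (Fin 2) ℂ) :
    matComm C (A + B) = matComm C A + matComm C B := by unfold matComm; noncomm_ring

theorem mc_sub_right (A B C : Matrix (Fin 2) (Fin 2) ℂ) :
    matComm C (A - B) = matComm C A - matComm C B := by unfold matComm; noncomm_ring

theorem mc_smul_left (c : ℂ) (A B : Matrix (Fin 2) (Fin 2) ℂ) :
    matComm (c • A) B = c • matComm A B := by
  unfold matComm; rw [smul_mul_assoc, mul_smul_comm, smul_sub]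

theorem mc_smul_right (c : ℂ) (A B : Matrix (Fin 2) (Fin 2) ℂ) :
    matComm A (c • B) = c • matComm A B := by
  unfold matComm; rw [smul_mul_assoc, mul_smul_comm, smul_sub]

theorem mc_self (A : Matrix (Fin 2) (Fin 2) ℂ) : matComm A A = 0 := by
  unfold matComm; simp

theorem mc_swap (A B : Matrix (Fin 2) (Fin 2) ℂ) : matComm A B = - matComm B A := by
  unfold matComm; simp

theorem entry_smooth {A : ℝ × ℝ → Matrix (Fin 2) (Fin 2) ℂ} (hA : ContDiff ℝ (⊤ : ℕ∞) A)
    (i j : Fin 2) : ContDiff ℝ (⊤ : ℕ∞) (fun p => A p i j) :=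
  contDiff_pi.1 (contDiff_pi.1 hA i) j

theorem mc_smooth {A B : ℝ × ℝ → Matrix (Fin 2) (Fin 2) ℂ} (hA : ContDiff ℝ (⊤ : ℕ∞) A)
    (hB : ContDiff ℝ (⊤ : ℕ∞) B) : ContDiff ℝ (⊤ : ℕ∞) (fun p => matComm (A p) (B p)) := by
  refine contDiff_pi.2 fun i => contDiff_pi.2 fun j => ?_
  simp only [matComm, Matrix.sub_apply, Matrix.mul_apply, Fin.sum_univ_two]
  exact (((entry_smooth hA _ _).mul (entry_smooth hB _ _)).add
    ((entry_smooth hA _ _).mul (entry_smooth hB _ _))).sub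
    (((entry_smooth hB _ _).mul (entry_smooth hA _ _)).add
    ((entry_smooth hB _ _).mul (entry_smooth hA _ _)))

end comm

/-- If the coefficient matrices `X₀, X₁, X₂, X₃` satisfy the eight constraints of the
extended Estabrook-Wahlquist method for the vcDNLS system, then for every smooth
solution `(q, r)` of the vcDNLS system the matrices `F` and `G` form a Lax pair:
the zero-curvature condition `F_t − G_x + [F,G] = 0` holds identically. -/
theorem vcDNLS_zero_curvature (a₁ a₂ : ℝ × ℝ → ℂ)
    (X₀ X₁ X₂ X₃ : ℝ × ℝ → Matrix (Fin 2) (Fin 2) ℂ)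
    (ha₁ : ContDiff ℝ (⊤ : ℕ∞) a₁) (ha₂ : ContDiff ℝ (⊤ : ℕ∞) a₂)
    (hX₀ : ContDiff ℝ (⊤ : ℕ∞) X₀) (hX₁ : ContDiff ℝ (⊤ : ℕ∞) X₁) (hX₂ : ContDiff ℝ (⊤ : ℕ∞) X₂)
    (hX₃ : ContDiff ℝ (⊤ : ℕ∞) X₃)
    (h1 : ∀ p : ℝ × ℝ, Dt X₁ p - Dx X₀ p + matComm (X₁ p) (X₀ p) = 0)
    (h2 : ∀ p : ℝ × ℝ,
      Dt X₃ p + I • Dx (Dx (fun p' => a₁ p' • X₃ p')) p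
        - I • Dx (fun p' => a₁ p' • matComm (X₁ p') (X₃ p')) p
        - I • matComm (X₁ p) (Dx (fun p' => a₁ p' • X₃ p') p)
        + (I * a₁ p) • matComm (X₁ p) (matComm (X₁ p) (X₃ p))
        + matComm (X₃ p) (X₀ p) = 0)
    (h3 : ∀ p : ℝ × ℝ,
      Dt X₂ p - I • Dx (Dx (fun p' => a₁ p' • X₂ p')) p
        + I • Dx (fun p' => a₁ p' • matComm (X₁ p') (X₂ p')) p
        + I • matComm (X₁ p) (Dx (fun p' => a₁ p' • X₂ p') p)
        - (I * a₁ p) • matComm (X₁ p) (matComm (X₁ p) (X₂ p))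
        + matComm (X₂ p) (X₀ p) = 0)
    (h4 : ∀ p : ℝ × ℝ,
      -Dx (fun p' => a₁ p' • matComm (X₂ p') (X₃ p')) p
        + a₁ p • matComm (X₁ p) (matComm (X₂ p) (X₃ p))
        - matComm (X₂ p) (Dx (fun p' => a₁ p' • X₃ p') p)
        + a₁ p • matComm (X₂ p) (matComm (X₁ p) (X₃ p))
        + matComm (X₃ p) (Dx (fun p' => a₁ p' • X₂ p') p)
        - a₁ p • matComm (X₃ p) (matComm (X₁ p) (X₂ p)) = 0)
    (h5 : ∀ p : ℝ × ℝ,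
      -matComm (X₃ p) (Dx (fun p' => a₁ p' • X₃ p') p)
        + a₁ p • matComm (X₃ p) (matComm (X₁ p) (X₃ p)) = 0)
    (h6 : ∀ p : ℝ × ℝ,
      matComm (X₂ p) (Dx (fun p' => a₁ p' • X₂ p') p)
        - a₁ p • matComm (X₂ p) (matComm (X₁ p) (X₂ p)) = 0)
    (h7 : ∀ p : ℝ × ℝ,
      Dx (fun p' => a₂ p' • X₂ p') p - a₂ p • matComm (X₁ p) (X₂ p)
        + (I * a₁ p) • matComm (X₂ p) (matComm (X₂ p) (X₃ p)) = 0)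
    (h8 : ∀ p : ℝ × ℝ,
      Dx (fun p' => a₂ p' • X₃ p') p - a₂ p • matComm (X₁ p) (X₃ p)
        + (I * a₁ p) • matComm (X₃ p) (matComm (X₂ p) (X₃ p)) = 0)
    (q r : ℝ × ℝ → ℂ) (hq : ContDiff ℝ (⊤ : ℕ∞) q) (hr : ContDiff ℝ (⊤ : ℕ∞) r)
    (heq1 : ∀ p : ℝ × ℝ,
      I * Dt q p + a₁ p * Dx (Dx q) p + 2 * I * a₂ p * q p * r p * Dx q p
        + I * a₂ p * (q p) ^ 2 * Dx r p = 0)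
    (heq2 : ∀ p : ℝ × ℝ,
      -I * Dt r p + a₁ p * Dx (Dx r) p - 2 * I * a₂ p * q p * r p * Dx r p
        - I * a₂ p * (r p) ^ 2 * Dx q p = 0)
    (F G : ℝ × ℝ → Matrix (Fin 2) (Fin 2) ℂ)
    (hF : F = fun p => X₁ p + r p • X₂ p + q p • X₃ p)
    (hG : G = fun p =>
      (I * a₁ p) • (Dx q p • X₃ p - Dx r p • X₂ p)
        + r p • (I • Dx (fun p' => a₁ p' • X₂ p') p)
        - q p • (I • Dx (fun p' => a₁ p' • X₃ p') p)
        - (I * a₁ p * r p) • matComm (X₁ p) (X₂ p)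
        + (I * a₁ p * q p) • matComm (X₁ p) (X₃ p)
        + (I * a₁ p * r p * q p) • matComm (X₂ p) (X₃ p)
        - (a₂ p * (r p) ^ 2 * q p) • X₂ p
        - (a₂ p * (q p) ^ 2 * r p) • X₃ p
        + X₀ p) :
    ∀ p : ℝ × ℝ, Dt F p - Dx G p + matComm (F p) (G p) = 0 := by
  intro p
  have hqx := Dx_smooth hq
  have hrx := Dx_smooth hr
  have hA2 : ContDiff ℝ (⊤ : ℕ∞) (fun p' => a₁ p' • X₂ p') := ha₁.smul hX₂
  have hA3 : ContDiff ℝ (⊤ : ℕ∞) (fun p' => a₁ p' • X₃ p') := ha₁.smul hX₃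
  have hB2 : ContDiff ℝ (⊤ : ℕ∞) (fun p' => a₂ p' • X₂ p') := ha₂.smul hX₂
  have hB3 : ContDiff ℝ (⊤ : ℕ∞) (fun p' => a₂ p' • X₃ p') := ha₂.smul hX₃
  have hC12 : ContDiff ℝ (⊤ : ℕ∞) (fun p' => a₁ p' • matComm (X₁ p') (X₂ p')) :=
    ha₁.smul (mc_smooth hX₁ hX₂)
  have hC13 : ContDiff ℝ (⊤ : ℕ∞) (fun p' => a₁ p' • matComm (X₁ p') (X₃ p')) :=
    ha₁.smul (mc_smooth hX₁ hX₃)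
  have hC23 : ContDiff ℝ (⊤ : ℕ∞) (fun p' => a₁ p' • matComm (X₂ p') (X₃ p')) :=
    ha₁.smul (mc_smooth hX₂ hX₃)
  have hD2 := Dx_smooth hA2
  have hD3 := Dx_smooth hA3
  have hrq : ContDiff ℝ (⊤ : ℕ∞) (fun p => r p * q p) := hr.mul hq
  have hrrq : ContDiff ℝ (⊤ : ℕ∞) (fun p => r p * (r p * q p)) := hr.mul hrq
  have hqrq : ContDiff ℝ (⊤ : ℕ∞) (fun p => q p * (r p * q p)) := hq.mul hrq
  have hG' : G = fun p =>
      I • (Dx q p • (a₁ p • X₃ p) - Dx r p • (a₁ p • X₂ p)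
        + r p • Dx (fun p' => a₁ p' • X₂ p') p
        - q p • Dx (fun p' => a₁ p' • X₃ p') p
        - r p • (a₁ p • matComm (X₁ p) (X₂ p))
        + q p • (a₁ p • matComm (X₁ p) (X₃ p))
        + (r p * q p) • (a₁ p • matComm (X₂ p) (X₃ p)))
        - (r p * (r p * q p)) • (a₂ p • X₂ p)
        - (q p * (r p * q p)) • (a₂ p • X₃ p)
        + X₀ p := by
    rw [hG]; funext p; module
  have s1 := sm hqx hA3
  have s2 := s1.sub (sm hrx hA2)
  have s3 := s2.add (sm hr hD2)
  have s4 := s3.sub (sm hq hD3)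
  have s5 := s4.sub (sm hr hC12)
  have s6 := s5.add (sm hq hC13)
  have s7 := s6.add (sm hrq hC23)
  have s8 := s7.const_smul I
  have s9 := s8.sub (sm hrrq hB2)
  have s10 := s9.sub (sm hqrq hB3)
  have eG : Dx G p = I • ((Dx q p • Dx (fun p' => a₁ p' • X₃ p') p + Dx (Dx q) p • (a₁ p • X₃ p))
        - (Dx r p • Dx (fun p' => a₁ p' • X₂ p') p + Dx (Dx r) p • (a₁ p • X₂ p))
        + (r p • Dx (Dx (fun p' => a₁ p' • X₂ p')) p + Dx r p • Dx (fun p' => a₁ p' • X₂ p') p)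
        - (q p • Dx (Dx (fun p' => a₁ p' • X₃ p')) p + Dx q p • Dx (fun p' => a₁ p' • X₃ p') p)
        - (r p • Dx (fun p' => a₁ p' • matComm (X₁ p') (X₂ p')) p
          + Dx r p • (a₁ p • matComm (X₁ p) (X₂ p)))
        + (q p • Dx (fun p' => a₁ p' • matComm (X₁ p') (X₃ p')) p
          + Dx q p • (a₁ p • matComm (X₁ p) (X₃ p)))
        + ((r p * q p) • Dx (fun p' => a₁ p' • matComm (X₂ p') (X₃ p')) p
          + (r p * Dx q p + Dx r p * q p) • (a₁ p • matComm (X₂ p) (X₃ p))))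
        - ((r p * (r p * q p)) • Dx (fun p' => a₂ p' • X₂ p') p
          + (r p * (r p * Dx q p + Dx r p * q p) + Dx r p * (r p * q p)) • (a₂ p • X₂ p))
        - ((q p * (r p * q p)) • Dx (fun p' => a₂ p' • X₃ p') p
          + (q p * (r p * Dx q p + Dx r p * q p) + Dx q p * (r p * q p)) • (a₂ p • X₃ p))
        + Dx X₀ p := by
    rw [hG', Dx_add' s10 hX₀, Dx_sub' s9 (sm hqrq hB3), Dx_sub' s8 (sm hrrq hB2),
      Dx_csmul' I s7, Dx_add' s6 (sm hrq hC23), Dx_add' s5 (sm hq hC13),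
      Dx_sub' s4 (sm hr hC12), Dx_sub' s3 (sm hq hD3), Dx_add' s2 (sm hr hD2),
      Dx_sub' s1 (sm hrx hA2), Dx_smul' hqx hA3, Dx_smul' hrx hA2, Dx_smul' hr hD2,
      Dx_smul' hq hD3, Dx_smul' hr hC12, Dx_smul' hq hC13, Dx_smul' hrq hC23,
      Dx_smul' hrrq hB2, Dx_smul' hqrq hB3, Dx_mul' hr hrq, Dx_mul' hq hrq, Dx_mul' hr hq]
  have eF : Dt F p = Dt X₁ p + (r p • Dt X₂ p + Dt r p • X₂ p) + (q p • Dt X₃ p + Dt q p • X₃ p) := by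
    rw [hF, Dt_add' (hX₁.add (sm hr hX₂)) (sm hq hX₃), Dt_add' hX₁ (sm hr hX₂),
      Dt_smul' hr hX₂, Dt_smul' hq hX₃]
  have eq : Dt q p = I * a₁ p * Dx (Dx q) p - 2 * a₂ p * q p * r p * Dx q p
      - a₂ p * (q p) ^ 2 * Dx r p := by
    linear_combination (-I) * heq1 p + (Dt q p + 2 * a₂ p * q p * r p * Dx q p
      + a₂ p * (q p) ^ 2 * Dx r p) * I_mul_I
  have er : Dt r p = - I * a₁ p * Dx (Dx r) p - 2 * a₂ p * q p * r p * Dx r p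
      - a₂ p * (r p) ^ 2 * Dx q p := by
    linear_combination I * heq2 p + (Dt r p + 2 * a₂ p * q p * r p * Dx r p
      + a₂ p * (r p) ^ 2 * Dx q p) * I_mul_I
  rw [eF, eG, eq, er, hF, hG']
  simp only [mc_add_left, mc_add_right, mc_sub_right, mc_smul_left, mc_smul_right, mc_self,
    mc_swap (X₃ p) (X₂ p)]
  linear_combination (norm := module) h1 p + q p • h2 p + r p • h3 p + (I * r p * q p) • h4 p
    + (I * q p ^ 2) • h5 p + (I * r p ^ 2) • h6 p + (r p ^ 2 * q p) • h7 p
    + (q p ^ 2 * r p) • h8 p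
end
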